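/- Let Y ∈ ℝ^{m×p} and 1 ≤ r ≤ m. Let X ∈ O_{m×r} satisfy the uniqueness conditions for (Y,r), and let Z be the unique minimizer of ‖Z − X‖_F² over H_{Y,r}. Then for every ε > 0 there exists δ > 0 such that for every X' ∈ O_{m×r} satisfying the uniqueness conditions for (Y,r) with ‖X' − X‖_F < δ, the unique minimizer Z' of ‖Z − X'‖_F² over H_{Y,r} satisfies ‖Z' − Z‖_F < ε. -/

import Mathlib

open Matrix BigOperators Filter

/-- The squared Frobenius norm of a real matrix. -/
def froSq {ι κ : Type*} [Fintype ι] [Fintype κ] (M : Matrix ι κ ℝ) : ℝ :=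
  ∑ i, ∑ j, (M i j) ^ 2

/-- The Frobenius norm of a real matrix. -/
noncomputable def fro {ι κ : Type*} [Fintype ι] [Fintype κ] (M : Matrix ι κ ℝ) : ℝ :=
  Real.sqrt (froSq M)

/-- The eigenvalues of `Y * Yᴴ`, sorted in descending order. -/
noncomputable def eigList {m : ℕ} {κ : Type*} [Fintype κ] (Y : Matrix (Fin m) κ ℝ) : List ℝ :=
  ((((Finset.univ : Finset (Fin m)).val.map
      (fun j => (Matrix.isHermitian_mul_conjTranspose_self Y).eigenvalues j)).sort (· ≤ ·)).reverse)

/-- The `i`-th largest singular value (1-indexed) of a real matrix, with the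
convention that it is `0` beyond the smaller matrix dimension. -/
noncomputable def sval {m : ℕ} {κ : Type*} [Fintype κ] (Y : Matrix (Fin m) κ ℝ) (i : ℕ) : ℝ :=
  Real.sqrt ((eigList Y).getD (i - 1) 0)

/-- The set of `m × r` real matrices with orthonormal columns. -/
def Stiefel (m r : ℕ) : Set (Matrix (Fin m) (Fin r) ℝ) :=
  {Z | Zᵀ * Z = 1}

/-- `H_{Y,r}`: the set of maximizers of `‖Zᵀ Y‖_F²` over the Stiefel manifold. -/
def HSet {m p : ℕ} (Y : Matrix (Fin m) (Fin p) ℝ) (r : ℕ) : Set (Matrix (Fin m) (Fin r) ℝ) :=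
  {Z | Z ∈ Stiefel m r ∧ ∀ W ∈ Stiefel m r, froSq (Wᵀ * Y) ≤ froSq (Zᵀ * Y)}

/-- The nuclear norm: the sum of all singular values. -/
noncomputable def nuclearNorm {a b : ℕ} (M : Matrix (Fin a) (Fin b) ℝ) : ℝ :=
  ∑ i ∈ Finset.range (min a b), sval M (i + 1)

/-- `U` maximizes `‖Uᵀ X‖_*` over `H_{Y,r}`. -/
def NucMax {m p r : ℕ} (Y : Matrix (Fin m) (Fin p) ℝ) (X U : Matrix (Fin m) (Fin r) ℝ) : Prop :=
  U ∈ HSet Y r ∧ ∀ V ∈ HSet Y r, nuclearNorm (Vᵀ * X) ≤ nuclearNorm (Uᵀ * X)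

/-- The uniqueness conditions for `(Y, r)` at `X`. -/
def UniqCond {m p : ℕ} (Y : Matrix (Fin m) (Fin p) ℝ) (r : ℕ)
    (X : Matrix (Fin m) (Fin r) ℝ) : Prop :=
  (∀ U, NucMax Y X U → (Uᵀ * X).det ≠ 0) ∧
  (∀ U₁ U₂, NucMax Y X U₁ → NucMax Y X U₂ → U₁ * U₁ᵀ = U₂ * U₂ᵀ)

/-- `Z` is a minimizer of `‖Z − X‖_F²` over `H_{Y,r}`. -/
def IsProj {m p r : ℕ} (Y : Matrix (Fin m) (Fin p) ℝ) (X Z : Matrix (Fin m) (Fin r) ℝ) : Prop :=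
  Z ∈ HSet Y r ∧ ∀ W ∈ HSet Y r, froSq (Z - X) ≤ froSq (W - X)

/-- The trace inner product of two matrices. -/
noncomputable def tinner {a b : ℕ} (A B : Matrix (Fin a) (Fin b) ℝ) : ℝ :=
  Matrix.trace (Aᵀ * B)

/-!
All matrices in `O_{m×r}` have Frobenius norm `√r`, so minimizing `‖Z - X‖_F²` over `H_{Y,r}` means
maximizing `tr (Zᵀ X)`. Since `H_{Y,r}` is invariant under right multiplication by orthogonal
matrices and `‖M‖_* = max_Q tr (Qᵀ M)` by the polar decomposition, a minimizer `Z` maximizes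
`‖Uᵀ X‖_*` over `H_{Y,r}` and `Zᵀ X` is positive semidefinite. By the uniqueness conditions two
minimizers `Z`, `Z'` have the same projection `Z Zᵀ`, so `Z' = Z Q` with `Q` orthogonal; comparing
traces gives `Qᵀ (Zᵀ X) = Zᵀ X`, and `Q = 1` because `Zᵀ X` is invertible. As `H_{Y,r}` is compact,
the set of minimizers depends upper hemicontinuously on `X`, and near a point with a single
minimizer this is continuity.
-/

section Argmin

open Topology

variable {X Y β : Type*} [TopologicalSpace X] [TopologicalSpace Y] [TopologicalSpace β]
  [LinearOrder β] [OrderClosedTopology β]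

theorem upperHemicontinuous_setOf_isMinOn {f : X → Y → β} (hf : Continuous (Function.uncurry f))
    {K : Set Y} (hK : IsCompact K) :
    UpperHemicontinuous fun x => {y ∈ K | IsMinOn (f x) K y} := by
  refine UpperHemicontinuous.of_forall_isOpen fun x u hu hsub => ?_
  suffices ∀ᶠ x' in 𝓝 x, ∀ y ∈ K, IsMinOn (f x') K y → y ∈ u from
    this.mono fun x' hx' y hy => hx' y hy.1 hy.2
  refine hK.eventually_forall_of_forall_eventually fun y hy => ?_
  by_cases hyu : y ∈ u
  · have hnear : ∀ᶠ q : X × Y in 𝓝 (x, y), q.2 ∈ u :=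
      continuousAt_snd.eventually (hu.mem_nhds hyu)
    exact hnear.mono fun q hq _ => hq
  · obtain ⟨w, hw, hlt⟩ : ∃ w ∈ K, f x w < f x y := by
      by_contra! hmin
      exact hyu (hsub ⟨hy, isMinOn_iff.2 hmin⟩)
    have hfar : ∀ᶠ q : X × Y in 𝓝 (x, y), f q.1 w < f q.1 q.2 :=
      (hf.comp (continuous_fst.prodMk continuous_const)).continuousAt.eventually_lt
        hf.continuousAt hlt
    exact hfar.mono fun q hq hmin => absurd (isMinOn_iff.1 hmin w hw) hq.not_ge

end Argmin

section PolarDecomposition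

open scoped ComplexOrder MatrixOrder

variable {𝕜 m n : Type*} [RCLike 𝕜]

theorem exists_linearIsometry_comp_eq {E V : Type*} [AddCommGroup E] [Module 𝕜 E]
    [NormedAddCommGroup V] [InnerProductSpace 𝕜 V] [FiniteDimensional 𝕜 V] {f g : E →ₗ[𝕜] V}
    (h : ∀ x, ‖f x‖ = ‖g x‖) : ∃ U : V →ₗᵢ[𝕜] V, U.toLinearMap ∘ₗ g = f := by
  obtain ⟨s, hs⟩ := g.rangeRestrict.exists_rightInverse_of_surjective g.range_rangeRestrict
  have hgs (y : g.range) : g (s y) = y := congrArg Subtype.val (LinearMap.congr_fun hs y)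
  let U₀ : g.range →ₗᵢ[𝕜] V := ⟨f ∘ₗ s, fun y => by simp [h, hgs]⟩
  refine ⟨U₀.extend, LinearMap.ext fun x => ?_⟩
  have hfs : f (s (g.rangeRestrict x)) - f x = 0 := by
    rw [← map_sub, ← norm_eq_zero, h, map_sub, hgs]
    simp
  exact (U₀.extend_apply (g.rangeRestrict x)).trans (sub_eq_zero.1 hfs)

variable [Fintype m]

theorem norm_toEuclideanLin_sq [Fintype n] [DecidableEq n] (A : Matrix m n 𝕜)
    (x : EuclideanSpace 𝕜 n) :
    ‖toEuclideanLin A x‖ ^ 2 = RCLike.re (inner 𝕜 x (toEuclideanLin (Aᴴ * A) x)) := by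
  classical
  have hcomp : toEuclideanLin (Aᴴ * A) x = toEuclideanLin Aᴴ (toEuclideanLin A x) := by
    simp [toLpLin_apply]
  rw [hcomp, toEuclideanLin_conjTranspose_eq_adjoint, LinearMap.adjoint_inner_right,
    inner_self_eq_norm_sq]

theorem exists_mem_unitaryGroup_mul_eq [DecidableEq m] [Finite n] {A B : Matrix m n 𝕜}
    (h : Aᴴ * A = Bᴴ * B) :
    ∃ Q ∈ unitaryGroup m 𝕜, Q * B = A := by
  classical
  have := Fintype.ofFinite n
  have hnorm (x : EuclideanSpace 𝕜 n) : ‖toEuclideanLin A x‖ = ‖toEuclideanLin B x‖ := by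
    rw [← sq_eq_sq₀ (norm_nonneg _) (norm_nonneg _), norm_toEuclideanLin_sq, h,
      norm_toEuclideanLin_sq]
  obtain ⟨U, hU⟩ := exists_linearIsometry_comp_eq hnorm
  obtain ⟨Q, hQ⟩ := EquivLike.surjective (toEuclideanCLM (n := m) (𝕜 := 𝕜)) U.toContinuousLinearMap
  refine ⟨Q, mem_unitaryGroup_iff'.2 ?_, toEuclideanLin.injective ?_⟩
  · apply EquivLike.injective (toEuclideanCLM (n := m) (𝕜 := 𝕜))
    rw [map_mul, map_star, hQ, map_one]
    exact (ContinuousLinearMap.norm_map_iff_adjoint_comp_self _).1 U.norm_map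
  · have hQU (y : EuclideanSpace 𝕜 m) : toEuclideanLin Q y = U y := DFunLike.congr_fun hQ y
    rw [← hU]
    ext x : 1
    simp [← hQU, toLpLin_apply]

variable [Fintype n] [DecidableEq n]

theorem exists_eq_sqrt_mul_unitary (M : Matrix n n 𝕜) :
    ∃ Q ∈ unitaryGroup n 𝕜, M = CFC.sqrt (M * Mᴴ) * Q := by
  have hS : (CFC.sqrt (M * Mᴴ)).IsHermitian := (CFC.sqrt_nonneg (M * Mᴴ)).posSemidef.isHermitian
  obtain ⟨Q, hQ, hQM⟩ := exists_mem_unitaryGroup_mul_eq (A := Mᴴ) (B := CFC.sqrt (M * Mᴴ)) <| by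
    rw [hS.eq, CFC.sqrt_mul_sqrt_self _ (posSemidef_self_mul_conjTranspose M).nonneg,
      conjTranspose_conjTranspose]
  refine ⟨Qᴴ, Unitary.star_mem hQ, ?_⟩
  rw [← hS.eq, ← conjTranspose_mul, hQM, conjTranspose_conjTranspose]

theorem trace_sqrt_eq_sum_sqrt_eigenvalues {A : Matrix n n 𝕜} (hA : A.PosSemidef) :
    trace (CFC.sqrt A) = ∑ i, (√(hA.isHermitian.eigenvalues i) : 𝕜) := by
  rw [CFC.sqrt_eq_real_sqrt A hA.nonneg, cfcₙ_eq_cfc, hA.isHermitian.cfc_eq, IsHermitian.cfc,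
    Unitary.conjStarAlgAut_apply, trace_mul_cycle]
  simp [trace_diagonal]

end PolarDecomposition

section TraceUnitary

open scoped ComplexOrder MatrixOrder

variable {𝕜 n : Type*} [RCLike 𝕜] [Fintype n]

theorem mul_eq_zero_of_mul_mul_conjTranspose_eq_zero {m : Type*} {P : Matrix n n 𝕜}
    (hP : P.PosSemidef) {B : Matrix m n 𝕜} (h : B * P * Bᴴ = 0) : B * P = 0 := by
  classical
  obtain ⟨C, rfl⟩ := CStarAlgebra.nonneg_iff_eq_star_mul_self.mp hP.nonneg
  rw [star_eq_conjTranspose] at h ⊢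
  have hBC : B * Cᴴ = 0 := by
    rw [← self_mul_conjTranspose_eq_zero]
    simpa [Matrix.mul_assoc] using h
  rw [← Matrix.mul_assoc, hBC, Matrix.zero_mul]

variable [DecidableEq n] {P Q : Matrix n n 𝕜}

-- For `P` positive semidefinite the left-hand trace is `‖(1 - Q) √P‖_F²`, so its sign gives the
-- bound `re (tr (Q P)) ≤ re (tr P)` and its vanishing gives the equality case `Q P = P`.
theorem re_trace_one_sub_mul_mul_conjTranspose (hP : P.IsHermitian) (hQ : Q ∈ unitaryGroup n 𝕜) :
    RCLike.re (trace ((1 - Q) * P * (1 - Q)ᴴ)) =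
      2 * (RCLike.re (trace P) - RCLike.re (trace (Q * P))) := by
  have hQPQ : trace (Q * P * Qᴴ) = trace P := by
    rw [trace_mul_cycle, ← star_eq_conjTranspose, mem_unitaryGroup_iff'.1 hQ, Matrix.one_mul]
  have hPQ : trace (P * Qᴴ) = star (trace (Q * P)) := by
    rw [← trace_conjTranspose, conjTranspose_mul, hP.eq]
  have hexpand : (1 - Q) * P * (1 - Q)ᴴ = P - Q * P - P * Qᴴ + Q * P * Qᴴ := by
    rw [conjTranspose_sub, conjTranspose_one]
    noncomm_ring
  rw [hexpand, trace_add, trace_sub, trace_sub, hQPQ, hPQ]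
  simp only [map_add, map_sub, RCLike.star_def, RCLike.conj_re]
  ring

theorem re_trace_unitary_mul_le (hP : P.PosSemidef) (hQ : Q ∈ unitaryGroup n 𝕜) :
    RCLike.re (trace (Q * P)) ≤ RCLike.re (trace P) := by
  have hnonneg := (RCLike.nonneg_iff.1 (hP.mul_mul_conjTranspose_same (1 - Q)).trace_nonneg).1
  rw [re_trace_one_sub_mul_mul_conjTranspose hP.isHermitian hQ] at hnonneg
  linarith

theorem unitary_mul_eq_self_of_re_trace_eq (hP : P.PosSemidef) (hQ : Q ∈ unitaryGroup n 𝕜)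
    (h : RCLike.re (trace (Q * P)) = RCLike.re (trace P)) : Q * P = P := by
  have hpos := hP.mul_mul_conjTranspose_same (1 - Q)
  have hre := re_trace_one_sub_mul_mul_conjTranspose hP.isHermitian hQ
  rw [h, sub_self, mul_zero] at hre
  have htrace : trace ((1 - Q) * P * (1 - Q)ᴴ) = 0 :=
    RCLike.ext (by simpa using hre) (by simpa using (RCLike.nonneg_iff.1 hpos.trace_nonneg).2)
  have hzero : (1 - Q) * P = 0 :=
    mul_eq_zero_of_mul_mul_conjTranspose_eq_zero hP (hpos.trace_eq_zero_iff.1 htrace)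
  rw [Matrix.sub_mul, Matrix.one_mul, sub_eq_zero] at hzero
  exact hzero.symm

end TraceUnitary

section NuclearNorm

open scoped MatrixOrder

theorem coe_eigList {m : ℕ} {κ : Type*} [Fintype κ] (Y : Matrix (Fin m) κ ℝ) :
    (eigList Y : Multiset ℝ) =
      Finset.univ.val.map (isHermitian_mul_conjTranspose_self Y).eigenvalues := by
  rw [eigList, Multiset.coe_reverse, Multiset.sort_eq]

theorem length_eigList {m : ℕ} {κ : Type*} [Fintype κ] (Y : Matrix (Fin m) κ ℝ) :
    (eigList Y).length = m := by
  rw [← Multiset.coe_card, coe_eigList, Multiset.card_map, Finset.card_val, Finset.card_fin]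

theorem nuclearNorm_eq_sum_sqrt_eigenvalues {a b : ℕ} (hab : a ≤ b)
    (M : Matrix (Fin a) (Fin b) ℝ) :
    nuclearNorm M = ∑ i, √((isHermitian_mul_conjTranspose_self M).eigenvalues i) :=
  calc nuclearNorm M = ∑ i ∈ Finset.range (eigList M).length, √((eigList M).getD i 0) := by
        simp only [nuclearNorm, sval, length_eigList, min_eq_left hab, Nat.add_sub_cancel]
    _ = ∑ i : Fin (eigList M).length, √((eigList M)[i.1]) := by
        rw [Finset.sum_range]
        simp only [Fin.is_lt, List.getD_eq_getElem]
    _ = ((eigList M).map Real.sqrt : Multiset ℝ).sum := by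
        rw [Fin.sum_univ_fun_getElem, Multiset.sum_coe]
    _ = ∑ i, √((isHermitian_mul_conjTranspose_self M).eigenvalues i) := by
        rw [← Multiset.map_coe, coe_eigList, Multiset.map_map]
        rfl

theorem nuclearNorm_eq_trace_sqrt {a b : ℕ} (hab : a ≤ b) (M : Matrix (Fin a) (Fin b) ℝ) :
    nuclearNorm M = trace (CFC.sqrt (M * Mᴴ)) := by
  rw [trace_sqrt_eq_sum_sqrt_eigenvalues (posSemidef_self_mul_conjTranspose M),
    nuclearNorm_eq_sum_sqrt_eigenvalues hab]
  rfl

variable {r : ℕ} {M Q : Matrix (Fin r) (Fin r) ℝ}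

theorem exists_eq_posSemidef_mul_orthogonal (M : Matrix (Fin r) (Fin r) ℝ) :
    ∃ P Q : Matrix (Fin r) (Fin r) ℝ, P.PosSemidef ∧ Q ∈ orthogonalGroup (Fin r) ℝ ∧
      M = P * Q ∧ nuclearNorm M = trace P := by
  obtain ⟨Q, hQ, hM⟩ := exists_eq_sqrt_mul_unitary M
  exact ⟨_, Q, (CFC.sqrt_nonneg _).posSemidef, hQ, hM, nuclearNorm_eq_trace_sqrt le_rfl M⟩

theorem trace_le_nuclearNorm (M : Matrix (Fin r) (Fin r) ℝ) : trace M ≤ nuclearNorm M := by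
  obtain ⟨P, Q, hP, hQ, rfl, hnuc⟩ := exists_eq_posSemidef_mul_orthogonal M
  rw [hnuc, trace_mul_comm]
  exact re_trace_unitary_mul_le hP hQ

theorem exists_orthogonal_trace_eq_nuclearNorm (M : Matrix (Fin r) (Fin r) ℝ) :
    ∃ Q ∈ orthogonalGroup (Fin r) ℝ, trace (Qᵀ * M) = nuclearNorm M := by
  obtain ⟨P, Q, -, hQ, hM, hnuc⟩ := exists_eq_posSemidef_mul_orthogonal M
  refine ⟨Q, hQ, ?_⟩
  rw [hnuc, hM, trace_mul_comm, Matrix.mul_assoc, (mem_orthogonalGroup_iff _ _).1 hQ,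
    Matrix.mul_one]

theorem posSemidef_of_trace_eq_nuclearNorm (h : trace M = nuclearNorm M) : M.PosSemidef := by
  obtain ⟨P, Q, hP, hQ, hM, hnuc⟩ := exists_eq_posSemidef_mul_orthogonal M
  have hQP : Q * P = P := unitary_mul_eq_self_of_re_trace_eq hP hQ <| by
    rw [trace_mul_comm, ← hM, h, hnuc]
  have hPt : Pᵀ = P := hP.isHermitian.eq
  have hPQ : P * Qᵀ = P := by
    rw [← hPt, ← transpose_mul, hQP]
  have hMP : M = P := by
    rw [hM, ← hPQ, Matrix.mul_assoc, (mem_orthogonalGroup_iff' _ _).1 hQ, Matrix.mul_one, hPQ]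
  rwa [hMP]

theorem eq_one_of_trace_eq_nuclearNorm (hdet : M.det ≠ 0) (hM : trace M = nuclearNorm M)
    (hQ : Q ∈ orthogonalGroup (Fin r) ℝ) (hQM : trace (Qᵀ * M) = nuclearNorm M) : Q = 1 := by
  have hfix : Qᵀ * M = M :=
    unitary_mul_eq_self_of_re_trace_eq (posSemidef_of_trace_eq_nuclearNorm hM)
      (Unitary.star_mem hQ) (congrArg RCLike.re (hQM.trans hM.symm))
  have hQ1 : Qᵀ = 1 :=
    ((isUnit_iff_isUnit_det M).2 hdet.isUnit).mul_right_cancel (hfix.trans (Matrix.one_mul M).symm)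
  rw [← transpose_transpose Q, hQ1, transpose_one]

end NuclearNorm

section Frobenius

variable {ι κ μ : Type*} [Fintype ι] [Fintype κ]

theorem froSq_eq_trace (A : Matrix ι κ ℝ) : froSq A = trace (Aᵀ * A) := by
  simp only [froSq, trace, diag, mul_apply, transpose_apply, pow_two]
  exact Finset.sum_comm

theorem froSq_sub (A B : Matrix ι κ ℝ) :
    froSq (A - B) = froSq A - 2 * trace (Aᵀ * B) + froSq B := by
  have hsymm : trace (Bᵀ * A) = trace (Aᵀ * B) := by
    rw [← trace_transpose, transpose_mul, transpose_transpose]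
  simp only [froSq_eq_trace, transpose_sub, Matrix.sub_mul, Matrix.mul_sub, trace_sub, hsymm]
  ring

theorem froSq_mul_of_transpose_mul_self [Fintype μ] [DecidableEq κ] {A : Matrix ι κ ℝ}
    (hA : Aᵀ * A = 1) (B : Matrix κ μ ℝ) : froSq (A * B) = froSq B := by
  rw [froSq_eq_trace, froSq_eq_trace, transpose_mul, Matrix.mul_assoc, ← Matrix.mul_assoc Aᵀ, hA,
    Matrix.one_mul]

theorem continuous_froSq : Continuous (froSq : Matrix ι κ ℝ → ℝ) := by
  unfold froSq
  fun_prop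

attribute [local instance] Matrix.frobeniusNormedAddCommGroup Matrix.frobeniusNormedSpace

theorem fro_eq_norm (A : Matrix ι κ ℝ) : fro A = ‖A‖ := by
  simp [Matrix.frobenius_norm_def, fro, froSq, Real.sqrt_eq_rpow]

open Topology in
theorem eventually_nhds_iff_fro {X : Matrix ι κ ℝ} {p : Matrix ι κ ℝ → Prop} :
    (∀ᶠ X' in 𝓝 X, p X') ↔ ∃ δ > 0, ∀ X', fro (X' - X) < δ → p X' := by
  simp only [fro_eq_norm, ← dist_eq_norm]
  exact Metric.eventually_nhds_iff

theorem isOpen_setOf_fro_sub_lt (Z : Matrix ι κ ℝ) (ε : ℝ) : IsOpen {W | fro (W - Z) < ε} :=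
  isOpen_lt (Real.continuous_sqrt.comp
    (continuous_froSq.comp (continuous_id.sub continuous_const))) continuous_const

theorem froSq_of_mem_stiefel {m r : ℕ} {Z : Matrix (Fin m) (Fin r) ℝ} (hZ : Z ∈ Stiefel m r) :
    froSq Z = r := by
  rw [froSq_eq_trace, show Zᵀ * Z = 1 from hZ, trace_one, Fintype.card_fin]

theorem isCompact_stiefel (m r : ℕ) : IsCompact (Stiefel m r) := by
  have hclosed : IsClosed (Stiefel m r) :=
    isClosed_eq (f := fun Z : Matrix (Fin m) (Fin r) ℝ => Zᵀ * Z) (by fun_prop) continuous_const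
  have := FiniteDimensional.proper_real (Matrix (Fin m) (Fin r) ℝ)
  refine (isCompact_closedBall 0 √r).of_isClosed_subset hclosed fun Z hZ => ?_
  rw [mem_closedBall_zero_iff, ← fro_eq_norm, fro, froSq_of_mem_stiefel hZ]

end Frobenius

section Projection

variable {m p r : ℕ} {Y : Matrix (Fin m) (Fin p) ℝ} {X Z : Matrix (Fin m) (Fin r) ℝ}

theorem isCompact_HSet (Y : Matrix (Fin m) (Fin p) ℝ) (r : ℕ) : IsCompact (HSet Y r) := by
  have hinter : HSet Y r = Stiefel m r ∩ ⋂ W ∈ Stiefel m r,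
      {Z | froSq (Wᵀ * Y) ≤ froSq (Zᵀ * Y)} := by
    ext Z
    simp [HSet]
  rw [hinter]
  exact (isCompact_stiefel m r).inter_right <| isClosed_biInter fun W _ =>
    isClosed_le continuous_const (continuous_froSq.comp (by fun_prop))

theorem mul_orthogonal_mem_HSet {V : Matrix (Fin m) (Fin r) ℝ} (hV : V ∈ HSet Y r)
    {Q : Matrix (Fin r) (Fin r) ℝ} (hQ : Q ∈ orthogonalGroup (Fin r) ℝ) : V * Q ∈ HSet Y r := by
  have hV1 : Vᵀ * V = 1 := hV.1
  refine ⟨?_, fun W hW => (hV.2 W hW).trans_eq ?_⟩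
  · change (V * Q)ᵀ * (V * Q) = 1
    rw [transpose_mul, Matrix.mul_assoc, ← Matrix.mul_assoc Vᵀ, hV1, Matrix.one_mul]
    exact (mem_orthogonalGroup_iff' _ _).1 hQ
  · rw [transpose_mul, Matrix.mul_assoc]
    refine (froSq_mul_of_transpose_mul_self ?_ _).symm
    rw [transpose_transpose]
    exact (mem_orthogonalGroup_iff _ _).1 hQ

theorem IsProj.trace_le (h : IsProj Y X Z) {V : Matrix (Fin m) (Fin r) ℝ} (hV : V ∈ HSet Y r) :
    trace (Vᵀ * X) ≤ trace (Zᵀ * X) := by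
  have hle := h.2 V hV
  rw [froSq_sub, froSq_sub, froSq_of_mem_stiefel h.1.1, froSq_of_mem_stiefel hV.1] at hle
  linarith

theorem IsProj.nuclearNorm_le_trace (h : IsProj Y X Z) {V : Matrix (Fin m) (Fin r) ℝ}
    (hV : V ∈ HSet Y r) : nuclearNorm (Vᵀ * X) ≤ trace (Zᵀ * X) := by
  obtain ⟨Q, hQ, hnuc⟩ := exists_orthogonal_trace_eq_nuclearNorm (Vᵀ * X)
  rw [← hnuc, ← Matrix.mul_assoc, ← transpose_mul]
  exact h.trace_le (mul_orthogonal_mem_HSet hV hQ)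

theorem IsProj.trace_eq_nuclearNorm (h : IsProj Y X Z) : trace (Zᵀ * X) = nuclearNorm (Zᵀ * X) :=
  (trace_le_nuclearNorm _).antisymm (h.nuclearNorm_le_trace h.1)

theorem IsProj.nucMax (h : IsProj Y X Z) : NucMax Y X Z :=
  ⟨h.1, fun _ hV => (h.nuclearNorm_le_trace hV).trans (trace_le_nuclearNorm _)⟩

theorem UniqCond.isProj_unique (hU : UniqCond Y r X) {Z' : Matrix (Fin m) (Fin r) ℝ}
    (h : IsProj Y X Z) (h' : IsProj Y X Z') : Z' = Z := by
  have hspan : Z' * Z'ᵀ = Z * Zᵀ := hU.2 _ _ h'.nucMax h.nucMax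
  have hZ' : Z'ᵀ * Z' = 1 := h'.1.1
  have hrot : Z * (Zᵀ * Z') = Z' := by
    rw [← Matrix.mul_assoc, ← hspan, Matrix.mul_assoc, hZ', Matrix.mul_one]
  have hQ : Zᵀ * Z' ∈ orthogonalGroup (Fin r) ℝ := by
    refine (mem_orthogonalGroup_iff' _ _).2 ?_
    rw [transpose_mul, transpose_transpose, Matrix.mul_assoc, hrot, hZ']
  have hQ1 : Zᵀ * Z' = 1 := by
    refine eq_one_of_trace_eq_nuclearNorm (hU.1 _ h.nucMax) h.trace_eq_nuclearNorm hQ ?_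
    rw [← Matrix.mul_assoc, ← transpose_mul, hrot, ← h.trace_eq_nuclearNorm]
    exact (h.trace_le h'.1).antisymm (h'.trace_le h.1)
  rw [← hrot, hQ1, Matrix.mul_one]

theorem upperHemicontinuous_setOf_isProj (Y : Matrix (Fin m) (Fin p) ℝ) (r : ℕ) :
    UpperHemicontinuous fun X : Matrix (Fin m) (Fin r) ℝ => {Z | IsProj Y X Z} :=
  upperHemicontinuous_setOf_isMinOn
    (f := fun X Z : Matrix (Fin m) (Fin r) ℝ => froSq (Z - X))
    (continuous_froSq.comp (continuous_snd.sub continuous_fst)) (isCompact_HSet Y r)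

end Projection

theorem stmt4_general {m p r : ℕ} (Y : Matrix (Fin m) (Fin p) ℝ) (X : Matrix (Fin m) (Fin r) ℝ)
    (hU : UniqCond Y r X) (Z : Matrix (Fin m) (Fin r) ℝ) (hZ : IsProj Y X Z) :
    ∀ ε > (0 : ℝ), ∃ δ > (0 : ℝ), ∀ X' : Matrix (Fin m) (Fin r) ℝ, fro (X' - X) < δ →
      ∀ Z' : Matrix (Fin m) (Fin r) ℝ, IsProj Y X' Z' → fro (Z' - Z) < ε := by
  intro ε hε
  refine eventually_nhds_iff_fro.1 <| (upperHemicontinuous_setOf_isProj Y r).forall_isOpen X _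
    (isOpen_setOf_fro_sub_lt Z ε) fun Z' hZ' => ?_
  change fro (Z' - Z) < ε
  simpa [hU.isProj_unique hZ hZ', fro, froSq] using hε

/-- Continuity of `T_{Y,r}` on the set of points satisfying the
uniqueness conditions. -/
theorem stmt4 {m p r : ℕ} (hr1 : 1 ≤ r) (hrm : r ≤ m)
    (Y : Matrix (Fin m) (Fin p) ℝ)
    (X : Matrix (Fin m) (Fin r) ℝ) (hX : X ∈ Stiefel m r) (hU : UniqCond Y r X)
    (Z : Matrix (Fin m) (Fin r) ℝ) (hZ : IsProj Y X Z) :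
    ∀ ε > (0 : ℝ), ∃ δ > (0 : ℝ), ∀ X' ∈ Stiefel m r, UniqCond Y r X' →
      fro (X' - X) < δ →
      ∀ Z' : Matrix (Fin m) (Fin r) ℝ, IsProj Y X' Z' → fro (Z' - Z) < ε := by
  intro ε hε
  obtain ⟨δ, hδ, hclose⟩ := stmt4_general Y X hU Z hZ ε hε
  exact ⟨δ, hδ, fun X' _ _ hX' => hclose X' hX'⟩
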